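/- arXiv:1611.10186 — 2 statements merged into one kernel-verified Lean document; each statement's English description precedes it below -/
import Mathlib

section
/- For an odd prime p, an integer t ≥ 1, and an integer c with gcd(p, c) = 1, the quadratic Gauss sum ∑_{r=0}^{p^t - 1} e(c r² / p^t) equals p^{t/2} if t is even, and equals p^{t/2} · (c/p) · χ_p if t is odd, where (c/p) is the Legendre symbol, χ_p = 1 if p ≡ 1 (mod 4) and χ_p = √(-1) if p ≡ 3 (mod 4), and e(x) = exp(2πix). -/
open Complex Finset

noncomputable def e (x : ℝ) : ℂ := Complex.exp (2 * Real.pi * Complex.I * x)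

/-!
Put `ζ = e(c / p ^ t)`, so that the sum is `G(ζ, p ^ t)` with `G(ζ, N) = ∑_{r < N} ζ ^ (r ^ 2)`.

Writing `r = d N b + a` and summing over `b` first gives `G(ζ, d² N) = d G(ζ ^ (d²), N)` for odd
`d`; hence only `N = 1` and `N = p` remain. For `N = p`, replacing `ζ` by `ζ ^ c` multiplies the
sum by `(c/p)`, which leaves `ζ = e(1 / p)`.

The value at `e(1 / N)`, for any odd `N = 2 m + 1`, follows Gauss. The alternating sum
`∑ k, (-1) ^ k [2m choose k]_q` satisfies a two-step recurrence and equals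
`∏_{k < m} (1 - q ^ (2 k + 1))`. At `q = ζ⁻²` its terms are `ζ ^ (k (k + 1))`, so completing the
square turns the identity into `G(ζ, N) = ∏_{k < m} (ζ ^ (2 k + 1) - ζ ^ (-(2 k + 1)))`. For
`ζ = e(1 / N)` the factors are `2 i sin (2 π (2 k + 1) / N)`, whose signs are visible, and
`G(ζ, N) G(ζ⁻¹, N) = N` gives the absolute value.
-/

section SumRange

variable {M : Type*} [AddCommMonoid M]

lemma sum_range_mul_eq_sum_sum (f : ℕ → M) (m n : ℕ) :
    ∑ r ∈ range (m * n), f r = ∑ b ∈ range n, ∑ a ∈ range m, f (m * b + a) := by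
  induction n with
  | zero => simp
  | succ n ih => rw [Nat.mul_succ, sum_range_add, ih, sum_range_succ]

lemma sum_range_comp_add_of_periodic {f : ℕ → M} {N : ℕ} (hf : Function.Periodic f N) (a : ℕ) :
    ∑ k ∈ range N, f (k + a) = ∑ k ∈ range N, f k := by
  induction a with
  | zero => rfl
  | succ a ih =>
    rw [← ih]
    cases N with
    | zero => rfl
    | succ n =>
      rw [sum_range_succ, sum_range_succ', zero_add, ← hf a]
      congr 2
      · simp only [add_assoc, add_comm 1]
      · ring

lemma sum_range_eq_sum_zmod (N : ℕ) [NeZero N] (f : ZMod N → M) :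
    ∑ r ∈ range N, f r = ∑ x, f x :=
  sum_nbij' (fun r ↦ (r : ZMod N)) ZMod.val (by simp)
    (fun x _ ↦ mem_range.mpr x.val_lt)
    (fun r hr ↦ ZMod.val_cast_of_lt (mem_range.mp hr)) (by simp) (by simp)

lemma sum_range_two_mul_add_one (n : ℕ) : ∑ k ∈ range n, (2 * k + 1) = n ^ 2 := by
  induction n with
  | zero => rfl
  | succ n ih => rw [sum_range_succ, ih]; ring

end SumRange

lemma geom_sum_primitiveRoot_pow {R : Type*} [CommRing R] [IsDomain R] {ζ : R} {N : ℕ}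
    (hζ : IsPrimitiveRoot ζ N) (a : ℕ) :
    ∑ b ∈ range N, (ζ ^ a) ^ b = if N ∣ a then (N : R) else 0 := by
  split_ifs with h
  · simp [(hζ.pow_eq_one_iff_dvd a).mpr h]
  · have hne : ζ ^ a - 1 ≠ 0 := sub_ne_zero.mpr fun h1 ↦ h ((hζ.pow_eq_one_iff_dvd a).mp h1)
    apply mul_left_cancel₀ hne
    rw [mul_geom_sum, pow_right_comm, hζ.pow_eq_one, one_pow, sub_self, mul_zero]

/-- The Gaussian binomial coefficient `[n choose k]_q`, defined by a `q`-analogue of Pascal's rule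
so that it makes sense in every commutative ring, including at roots of unity `q`. -/
def gaussBinom {R : Type*} [CommRing R] (q : R) : ℕ → ℕ → R
  | _, 0 => 1
  | 0, _ + 1 => 0
  | n + 1, k + 1 => gaussBinom q n k + q ^ (k + 1) * gaussBinom q n (k + 1)

section GaussBinom

variable {R : Type*} [CommRing R] (q : R)

@[simp]
lemma gaussBinom_zero_right (n : ℕ) : gaussBinom q n 0 = 1 := by
  cases n <;> rfl

lemma gaussBinom_succ_succ (n k : ℕ) :
    gaussBinom q (n + 1) (k + 1) = gaussBinom q n k + q ^ (k + 1) * gaussBinom q n (k + 1) :=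
  rfl

lemma gaussBinom_eq_zero_of_lt {n k : ℕ} (h : n < k) : gaussBinom q n k = 0 := by
  induction n generalizing k with
  | zero =>
    obtain ⟨k, rfl⟩ := Nat.exists_eq_succ_of_ne_zero h.ne'
    rfl
  | succ n ih =>
    obtain ⟨k, rfl⟩ := Nat.exists_eq_succ_of_ne_zero (Nat.ne_zero_of_lt h)
    rw [gaussBinom_succ_succ, ih (by omega), ih (by omega), mul_zero, add_zero]

lemma gaussBinom_succ_succ' (n k : ℕ) :
    gaussBinom q (n + 1) (k + 1) = q ^ (n - k) * gaussBinom q n k + gaussBinom q n (k + 1) := by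
  induction n generalizing k with
  | zero => cases k <;> simp [gaussBinom]
  | succ n ih =>
    cases k with
    | zero =>
      have hn := ih 0
      simp only [gaussBinom_succ_succ, gaussBinom_zero_right, Nat.sub_zero] at hn ⊢
      linear_combination q * hn
    | succ k =>
      have hpow : q ^ (k + 2) * (q ^ (n - (k + 1)) * gaussBinom q n (k + 1)) =
          q ^ (n - k) * (q ^ (k + 1) * gaussBinom q n (k + 1)) := by
        rcases lt_or_ge n (k + 1) with h | h
        · simp [gaussBinom_eq_zero_of_lt q h]
        · rw [← mul_assoc, ← mul_assoc, ← pow_add, ← pow_add]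
          congr 2
          omega
      rw [Nat.add_sub_add_right, gaussBinom_succ_succ q (n + 1)]
      linear_combination ih k + q ^ (k + 2) * ih (k + 1) + hpow
        - q ^ (n - k) * gaussBinom_succ_succ q n k - gaussBinom_succ_succ q n (k + 1)

lemma one_sub_pow_mul_gaussBinom_succ_succ {n k : ℕ} (h : k ≤ n) :
    (1 - q ^ (k + 1)) * gaussBinom q (n + 1) (k + 1) = (1 - q ^ (n + 1)) * gaussBinom q n k := by
  have hpow : q ^ (n + 1) = q ^ (k + 1) * q ^ (n - k) := by rw [← pow_add]; congr 1; omega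
  rw [hpow]
  linear_combination gaussBinom_succ_succ q n k - q ^ (k + 1) * gaussBinom_succ_succ' q n k

lemma sum_neg_one_pow_mul_gaussBinom_add_two (n : ℕ) :
    ∑ k ∈ range (n + 3), (-1) ^ k * gaussBinom q (n + 2) k =
      (1 - q ^ (n + 1)) * ∑ k ∈ range (n + 1), (-1) ^ k * gaussBinom q n k := by
  have hterm : ∀ k ∈ range (n + 1), (-1) ^ (k + 1) * gaussBinom q (n + 2) (k + 1) =
      (1 - q ^ (n + 1)) * ((-1) ^ k * gaussBinom q n k) +
        ((-1) ^ (k + 1) * gaussBinom q (n + 1) (k + 1) - (-1) ^ k * gaussBinom q (n + 1) k) := by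
    intro k hk
    have habsorb := one_sub_pow_mul_gaussBinom_succ_succ q (mem_range_succ_iff.mp hk)
    rw [gaussBinom_succ_succ q (n + 1) k, pow_succ (-1)]
    linear_combination (-1) ^ k * habsorb
  have hself : gaussBinom q (n + 2) (n + 2) = gaussBinom q (n + 1) (n + 1) := by
    rw [gaussBinom_succ_succ, gaussBinom_eq_zero_of_lt q (Nat.lt_succ_self _), mul_zero, add_zero]
  rw [sum_range_succ', sum_range_succ, sum_congr rfl hterm, sum_add_distrib, ← mul_sum,
    sum_range_sub (fun k ↦ (-1) ^ k * gaussBinom q (n + 1) k), hself]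
  simp only [gaussBinom_zero_right]
  ring

lemma sum_neg_one_pow_mul_gaussBinom_two_mul (m : ℕ) :
    ∑ k ∈ range (2 * m + 1), (-1) ^ k * gaussBinom q (2 * m) k =
      ∏ k ∈ range m, (1 - q ^ (2 * k + 1)) := by
  induction m with
  | zero => simp
  | succ m ih =>
    rw [prod_range_succ, ← ih, mul_comm (Finset.sum _ _), mul_add_one,
      ← sum_neg_one_pow_mul_gaussBinom_add_two]

end GaussBinom

lemma pow_choose_mul_gaussBinom_of_primitiveRoot {R : Type*} [CommRing R] [IsDomain R] {q : R}
    {n k : ℕ} (hq : IsPrimitiveRoot q (n + 1)) (h : k ≤ n) :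
    q ^ (k + 1).choose 2 * gaussBinom q n k = (-1) ^ k := by
  induction k with
  | zero => simp
  | succ k ih =>
    have hvanish : gaussBinom q (n + 1) (k + 1) = 0 := by
      have hne : 1 - q ^ (k + 1) ≠ 0 :=
        sub_ne_zero.mpr (hq.pow_ne_one_of_pos_of_lt k.succ_ne_zero (by omega)).symm
      apply (mul_eq_zero.mp ?_).resolve_left hne
      rw [one_sub_pow_mul_gaussBinom_succ_succ q (by omega), hq.pow_eq_one, sub_self, zero_mul]
    rw [gaussBinom_succ_succ] at hvanish
    rw [Nat.choose_succ_succ' (k + 1) 1, Nat.choose_one_right, pow_add, pow_succ (-1),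
      ← ih (by omega)]
    linear_combination q ^ (k + 1).choose 2 * hvanish

/-- The quadratic Gauss sum `∑_{r < N} ζ ^ (r ^ 2)` attached to an `N`-th root of unity `ζ`. The
sum `∑_{r < N} e(c r² / N)` is the case `ζ = e(c / N)`. -/
def quadGaussSum {R : Type*} [Semiring R] (ζ : R) (N : ℕ) : R :=
  ∑ r ∈ range N, ζ ^ r ^ 2

lemma periodic_pow_sq {M : Type*} [Monoid M] {ζ : M} {N : ℕ} (hζ : ζ ^ N = 1) :
    Function.Periodic (fun r : ℕ ↦ ζ ^ r ^ 2) N := fun r ↦ by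
  dsimp only
  rw [show (r + N) ^ 2 = r ^ 2 + N * (2 * r + N) by ring, pow_add, pow_mul ζ N, hζ, one_pow,
    mul_one]

lemma quadGaussSum_sq_mul {R : Type*} [CommRing R] [IsDomain R] {ζ : R} {d N : ℕ}
    (hd : Odd d) (hN : N ≠ 0) (hζ : IsPrimitiveRoot ζ (d ^ 2 * N)) :
    quadGaussSum ζ (d ^ 2 * N) = d * quadGaussSum (ζ ^ d ^ 2) N := by
  have hω : IsPrimitiveRoot (ζ ^ (d * N)) d :=
    hζ.pow (by have := hd.pos; positivity) (by ring)
  have hinner : ∀ a, ∑ b ∈ range d, ζ ^ (d * N * b + a) ^ 2 =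
      if d ∣ a then d * ζ ^ a ^ 2 else 0 := by
    intro a
    have hexpand : ∀ b, ζ ^ (d * N * b + a) ^ 2 = ζ ^ a ^ 2 * ((ζ ^ (d * N)) ^ (2 * a)) ^ b := by
      intro b
      rw [show (d * N * b + a) ^ 2 = a ^ 2 + d * N * (2 * a) * b + d ^ 2 * N * (N * b ^ 2) by ring,
        pow_add, pow_mul ζ (d ^ 2 * N), hζ.pow_eq_one, one_pow, mul_one, pow_add, pow_mul, pow_mul]
    have hdvd : d ∣ 2 * a ↔ d ∣ a := hd.coprime_two_right.dvd_mul_left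
    rw [sum_congr rfl fun b _ ↦ hexpand b, ← mul_sum, geom_sum_primitiveRoot_pow hω]
    simp only [hdvd, mul_comm (ζ ^ a ^ 2), ite_mul, zero_mul]
  have hblock : ∀ b, ∑ a ∈ range d, (if d ∣ d * b + a then d * ζ ^ (d * b + a) ^ 2 else 0) =
      d * (ζ ^ d ^ 2) ^ b ^ 2 := by
    intro b
    rw [sum_eq_single_of_mem 0 (mem_range.mpr hd.pos)]
    · simp [mul_pow, pow_mul]
    · intro a ha ha0
      have hndvd : ¬d ∣ d * b + a := by
        rw [Nat.dvd_add_right (dvd_mul_right d b)]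
        exact Nat.not_dvd_of_pos_of_lt (Nat.pos_of_ne_zero ha0) (mem_range.mp ha)
      rw [if_neg hndvd]
  calc quadGaussSum ζ (d ^ 2 * N)
      = ∑ a ∈ range (d * N), ∑ b ∈ range d, ζ ^ (d * N * b + a) ^ 2 := by
        rw [quadGaussSum, show d ^ 2 * N = d * N * d by ring, sum_range_mul_eq_sum_sum, sum_comm]
    _ = ∑ b ∈ range N, ∑ a ∈ range d,
          if d ∣ d * b + a then d * ζ ^ (d * b + a) ^ 2 else 0 := by
        simp only [hinner, sum_range_mul_eq_sum_sum]
    _ = d * quadGaussSum (ζ ^ d ^ 2) N := by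
        simp only [hblock, quadGaussSum, mul_sum]

section Field

variable {K : Type*} [Field K] {ζ : K} {N : ℕ}

lemma quadGaussSum_mul_quadGaussSum_inv (hN : Odd N) (hζ : IsPrimitiveRoot ζ N) :
    quadGaussSum ζ N * quadGaussSum ζ⁻¹ N = N := by
  have hζ0 : ζ ≠ 0 := hζ.ne_zero hN.pos.ne'
  have hterm : ∀ h y : ℕ, ζ ^ (h + y) ^ 2 * ζ⁻¹ ^ y ^ 2 = ζ ^ h ^ 2 * (ζ ^ (2 * h)) ^ y := by
    intro h y
    rw [inv_pow, mul_inv_eq_iff_eq_mul₀ (pow_ne_zero _ hζ0)]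
    ring
  have hdvd : ∀ h ∈ range N, N ∣ 2 * h ↔ h = 0 := fun h hh ↦ by
    rw [hN.coprime_two_right.dvd_mul_left]
    exact ⟨fun hdvd ↦ Nat.eq_zero_of_dvd_of_lt hdvd (mem_range.mp hh), fun h0 ↦ h0 ▸ dvd_zero N⟩
  calc quadGaussSum ζ N * quadGaussSum ζ⁻¹ N
      = ∑ y ∈ range N, ∑ h ∈ range N, ζ ^ (h + y) ^ 2 * ζ⁻¹ ^ y ^ 2 := by
        simp only [quadGaussSum, ← sum_mul, mul_sum,
          sum_range_comp_add_of_periodic (periodic_pow_sq hζ.pow_eq_one)]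
    _ = ∑ h ∈ range N, ζ ^ h ^ 2 * if N ∣ 2 * h then (N : K) else 0 := by
        rw [sum_comm]
        simp only [hterm, ← geom_sum_primitiveRoot_pow hζ, mul_sum]
    _ = N := by
        rw [sum_eq_single_of_mem 0 (mem_range.mpr hN.pos)]
        · simp
        · intro h hh h0
          rw [if_neg (mt (hdvd h hh).mp h0), mul_zero]

lemma pow_sq_mul_neg_one_pow_mul_gaussBinom {m k : ℕ} (hζ : IsPrimitiveRoot ζ (2 * m + 1))
    (hk : k ≤ 2 * m) :
    ζ ^ m ^ 2 * ((-1) ^ k * gaussBinom (ζ⁻¹ ^ 2) (2 * m) k) = ζ ^ (k + (m + 1)) ^ 2 := by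
  have hζ0 : ζ ≠ 0 := hζ.ne_zero (Nat.succ_ne_zero _)
  have hq : IsPrimitiveRoot (ζ⁻¹ ^ 2) (2 * m + 1) := hζ.inv.pow_of_coprime 2 (by simp)
  have hchoose : 2 * (k + 1).choose 2 = k * (k + 1) := by
    have h := Nat.add_one_mul_choose_eq k 1
    rw [Nat.choose_one_right] at h
    linarith
  have hbinom : gaussBinom (ζ⁻¹ ^ 2) (2 * m) k = ζ ^ (k * (k + 1)) * (-1) ^ k := by
    rw [← inv_mul_eq_iff_eq_mul₀ (pow_ne_zero _ hζ0), ← inv_pow, ← hchoose, pow_mul]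
    exact pow_choose_mul_gaussBinom_of_primitiveRoot hq hk
  have hsign : (-1 : K) ^ k * (-1) ^ k = 1 := by rw [← mul_pow]; simp
  -- Completing the square: `k (k + 1) + m² ≡ (k + m + 1)²` modulo `2 m + 1`.
  have hsquare : ζ ^ (k + (m + 1)) ^ 2 = ζ ^ m ^ 2 * ζ ^ (k * (k + 1)) := by
    rw [← pow_add, show (k + (m + 1)) ^ 2 = m ^ 2 + k * (k + 1) + (2 * m + 1) * (k + 1) by ring,
      pow_add _ _ (_ * (k + 1)), pow_mul _ (2 * m + 1), hζ.pow_eq_one, one_pow, mul_one]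
  rw [hsquare, hbinom]
  linear_combination ζ ^ m ^ 2 * ζ ^ (k * (k + 1)) * hsign

lemma quadGaussSum_eq_prod {m : ℕ} (hζ : IsPrimitiveRoot ζ (2 * m + 1)) :
    quadGaussSum ζ (2 * m + 1) = ∏ k ∈ range m, (ζ ^ (2 * k + 1) - ζ⁻¹ ^ (2 * k + 1)) := by
  have hζ0 : ζ ≠ 0 := hζ.ne_zero (Nat.succ_ne_zero _)
  have hfactor : ∀ k, ζ ^ (2 * k + 1) * (1 - (ζ⁻¹ ^ 2) ^ (2 * k + 1)) =
      ζ ^ (2 * k + 1) - ζ⁻¹ ^ (2 * k + 1) := by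
    intro k
    have hcancel : ζ ^ (2 * k + 1) * ζ⁻¹ ^ (2 * k + 1) = 1 := by
      rw [← mul_pow, mul_inv_cancel₀ hζ0, one_pow]
    rw [pow_right_comm]
    linear_combination -ζ⁻¹ ^ (2 * k + 1) * hcancel
  calc quadGaussSum ζ (2 * m + 1)
      = ∑ k ∈ range (2 * m + 1), ζ ^ m ^ 2 * ((-1) ^ k * gaussBinom (ζ⁻¹ ^ 2) (2 * m) k) := by
        rw [sum_congr rfl fun k hk ↦
            pow_sq_mul_neg_one_pow_mul_gaussBinom hζ (mem_range_succ_iff.mp hk),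
          sum_range_comp_add_of_periodic (periodic_pow_sq hζ.pow_eq_one), quadGaussSum]
    _ = (∏ k ∈ range m, ζ ^ (2 * k + 1)) * ∏ k ∈ range m, (1 - (ζ⁻¹ ^ 2) ^ (2 * k + 1)) := by
        rw [← mul_sum, sum_neg_one_pow_mul_gaussBinom_two_mul, prod_pow_eq_pow_sum,
          sum_range_two_mul_add_one]
    _ = ∏ k ∈ range m, (ζ ^ (2 * k + 1) - ζ⁻¹ ^ (2 * k + 1)) := by
        rw [← prod_mul_distrib]
        exact prod_congr rfl fun k _ ↦ hfactor k

end Field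

lemma sum_addChar_sq_eq_gaussSum {F R : Type*} [Field F] [Fintype F] [DecidableEq F]
    [CommRing R] [IsDomain R] (hF : ringChar F ≠ 2) {ψ : AddChar F R} (hψ : ψ ≠ 1) :
    ∑ x, ψ (x ^ 2) = gaussSum ((quadraticChar F).ringHomComp (Int.castRingHom R)) ψ := by
  have hcard : ∀ a : F, (#{x : F | x ^ 2 = a} : R) = quadraticChar F a + 1 := by
    intro a
    have := quadraticChar_card_sqrts hF a
    rw [Set.toFinset_ofPred] at this
    exact_mod_cast congrArg (Int.cast : ℤ → R) this
  calc ∑ x, ψ (x ^ 2)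
      = ∑ a, ((quadraticChar F a : R) + 1) * ψ a := by
        simp only [← hcard, ← nsmul_eq_mul, ← sum_const]
        rw [← sum_fiberwise univ (fun x : F ↦ x ^ 2)]
        exact sum_congr rfl fun a _ ↦ sum_congr rfl fun x hx ↦ by rw [(mem_filter.mp hx).2]
    _ = gaussSum ((quadraticChar F).ringHomComp (Int.castRingHom R)) ψ := by
        simp only [add_mul, one_mul, sum_add_distrib, AddChar.sum_eq_zero_of_ne_one hψ, add_zero]
        rfl

lemma sum_addChar_mul_sq {F R : Type*} [Field F] [Fintype F] [DecidableEq F]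
    [CommRing R] [IsDomain R] (hF : ringChar F ≠ 2) {ψ : AddChar F R} (hψ : ψ ≠ 1) {c : F}
    (hc : c ≠ 0) : ∑ x, ψ (c * x ^ 2) = quadraticChar F c * ∑ x, ψ (x ^ 2) := by
  set χ := (quadraticChar F).ringHomComp (Int.castRingHom R)
  have hχ : χ⁻¹ = χ := ((quadraticChar_isQuadratic F).comp _).inv
  calc ∑ x, ψ (c * x ^ 2)
      = gaussSum χ (ψ.mulShift c) :=
        sum_addChar_sq_eq_gaussSum hF (AddChar.IsPrimitive.of_ne_one hψ hc)
    _ = quadraticChar F c * ∑ x, ψ (x ^ 2) := by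
        rw [← Units.val_mk0 hc, gaussSum_mulShift_eq, hχ, sum_addChar_sq_eq_gaussSum hF hψ]
        rfl

lemma quadGaussSum_zpow {K : Type*} [Field K] {p : ℕ} [Fact p.Prime] (hp : Odd p) {ζ : K}
    (hζ : IsPrimitiveRoot ζ p) {c : ℤ} (hc : (c : ZMod p) ≠ 0) :
    quadGaussSum (ζ ^ c) p = legendreSym p c * quadGaussSum ζ p := by
  set ψ : AddChar (ZMod p) K := AddChar.zmodChar p hζ.pow_eq_one
  have hF : ringChar (ZMod p) ≠ 2 := by
    rw [ZMod.ringChar_zmod_n]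
    exact hp.ne_two_of_dvd_nat dvd_rfl
  have hψ_natCast : ∀ n : ℕ, ψ n = ζ ^ n := AddChar.zmodChar_apply' hζ.pow_eq_one
  have hψ_one : ψ 1 = ζ := by simpa using hψ_natCast 1
  have hψ : ψ ≠ 1 := by
    rw [AddChar.zmod_char_ne_one_iff, hψ_one]
    exact hζ.ne_one (Fact.out : p.Prime).one_lt
  have hψ_mul : ∀ r : ℕ, (ζ ^ c) ^ r ^ 2 = ψ (c * (r : ZMod p) ^ 2) := by
    intro r
    rw [← Nat.cast_pow, mul_comm, ← nsmul_eq_mul, AddChar.map_nsmul_eq_pow, ← zsmul_one,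
      AddChar.map_zsmul_eq_zpow, hψ_one]
  calc quadGaussSum (ζ ^ c) p
      = ∑ x, ψ (c * x ^ 2) := by
        rw [← sum_range_eq_sum_zmod p fun x ↦ ψ (c * x ^ 2)]
        exact sum_congr rfl fun r _ ↦ hψ_mul r
    _ = legendreSym p c * ∑ x, ψ (x ^ 2) := sum_addChar_mul_sq hF hψ hc
    _ = legendreSym p c * quadGaussSum ζ p := by
        rw [← sum_range_eq_sum_zmod p fun x ↦ ψ (x ^ 2)]
        simp only [← Nat.cast_pow, hψ_natCast, quadGaussSum]

lemma norm_quadGaussSum {N : ℕ} (hN : Odd N) {ζ : ℂ} (hζ : IsPrimitiveRoot ζ N) :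
    ‖quadGaussSum ζ N‖ = √N := by
  have hconj : (starRingEnd ℂ) (quadGaussSum ζ N) = quadGaussSum ζ⁻¹ N := by
    simp only [quadGaussSum, map_sum, map_pow,
      Complex.inv_eq_conj (hζ.norm'_eq_one hN.pos.ne')]
  have hsq : ((‖quadGaussSum ζ N‖ ^ 2 : ℝ) : ℂ) = N := by
    rw [← Complex.normSq_eq_norm_sq, ← Complex.mul_conj, hconj,
      quadGaussSum_mul_quadGaussSum_inv hN hζ]
  rw [← Real.sqrt_sq (norm_nonneg (quadGaussSum ζ N))]
  exact congrArg Real.sqrt (by exact_mod_cast hsq)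

lemma e_int_mul (n : ℤ) (x : ℝ) : e (n * x) = e x ^ n := by
  rw [e, e, ← Complex.exp_int_mul]
  push_cast
  ring_nf

lemma e_nat_mul (n : ℕ) (x : ℝ) : e (n * x) = e x ^ n := by
  exact_mod_cast e_int_mul n x

lemma e_sub_inv (x : ℝ) : e x - (e x)⁻¹ = I * (2 * Real.sin (2 * Real.pi * x) : ℝ) := by
  have harg : 2 * Real.pi * I * x = 2 * Real.pi * x * I := by ring
  rw [e, ← Complex.exp_neg, harg]
  push_cast
  rw [Complex.two_sin, neg_mul]
  linear_combination (cexp (-(2 * Real.pi * x * I)) - cexp (2 * Real.pi * x * I)) * -I_sq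

lemma isPrimitiveRoot_e_div {c : ℤ} {N : ℕ} (hN : N ≠ 0) (hc : IsCoprime c N) :
    IsPrimitiveRoot (e (c / N)) N := by
  have := Complex.isPrimitiveRoot_exp_of_isCoprime c N hN hc
  rw [e]
  exact_mod_cast this

lemma isPrimitiveRoot_e_one_div {N : ℕ} (hN : N ≠ 0) : IsPrimitiveRoot (e (1 / N)) N := by
  simpa using isPrimitiveRoot_e_div hN (isCoprime_one_left (x := (N : ℤ)))

lemma quadGaussSum_e_div (c : ℤ) (N : ℕ) :
    quadGaussSum (e (c / N)) N = ∑ r ∈ range N, e ((c * (r : ℤ) ^ 2 : ℤ) / N) := by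
  refine sum_congr rfl fun r _ ↦ ?_
  rw [← e_nat_mul]
  congr 1
  push_cast
  ring

lemma sin_two_pi_mul_pos {x : ℝ} (h0 : 0 < x) (h1 : x < 1 / 2) :
    0 < Real.sin (2 * Real.pi * x) :=
  Real.sin_pos_of_pos_of_lt_pi (by positivity) (by nlinarith [Real.pi_pos])

lemma sin_two_pi_mul_neg {x : ℝ} (h0 : 1 / 2 < x) (h1 : x < 1) :
    Real.sin (2 * Real.pi * x) < 0 := by
  rw [← Real.sin_sub_two_pi]
  exact Real.sin_neg_of_neg_of_neg_pi_lt (by nlinarith [Real.pi_pos]) (by nlinarith [Real.pi_pos])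

lemma neg_one_pow_mul_prod_sin_pos (m : ℕ) :
    0 < (-1) ^ (m / 2) *
      ∏ k ∈ range m, 2 * Real.sin (2 * Real.pi * ((2 * k + 1 : ℕ) / (2 * m + 1 : ℕ))) := by
  set s : ℕ → ℝ := fun k ↦ 2 * Real.sin (2 * Real.pi * ((2 * k + 1 : ℕ) / (2 * m + 1 : ℕ)))
  have hden : (0 : ℝ) < (2 * m + 1 : ℕ) := by positivity
  have hs_pos : ∀ k < (m + 1) / 2, 0 < s k := by
    intro k hk
    refine mul_pos two_pos (sin_two_pi_mul_pos (by positivity) ?_)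
    rw [div_lt_div_iff₀ hden two_pos]
    exact_mod_cast (by omega : (2 * k + 1) * 2 < 1 * (2 * m + 1))
  have hs_neg : ∀ k, (m + 1) / 2 ≤ k → k < m → s k < 0 := by
    intro k hk hkm
    refine mul_neg_of_pos_of_neg two_pos (sin_two_pi_mul_neg ?_ ?_)
    · rw [div_lt_div_iff₀ two_pos hden]
      exact_mod_cast (by omega : 1 * (2 * m + 1) < (2 * k + 1) * 2)
    · rw [div_lt_one hden]
      exact_mod_cast (by omega : 2 * k + 1 < 2 * m + 1)
  have hsplit : m = (m + 1) / 2 + m / 2 := by omega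
  have hprod : (-1) ^ (m / 2) * ∏ k ∈ range m, s k =
      (∏ k ∈ range ((m + 1) / 2), s k) *
        ∏ k ∈ range (m / 2), -s ((m + 1) / 2 + k) := by
    rw [prod_neg, card_range]
    nth_rw 2 [hsplit]
    rw [prod_range_add, mul_left_comm]
  rw [hprod]
  exact mul_pos (prod_pos fun k hk ↦ hs_pos k (mem_range.mp hk))
    (prod_pos fun k hk ↦ neg_pos.mpr (hs_neg _ (by omega) (by have := mem_range.mp hk; omega)))

lemma quadGaussSum_e_one_div {N : ℕ} (hN : Odd N) :
    quadGaussSum (e (1 / N)) N = √N * if N % 4 = 1 then 1 else I := by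
  have hζ : IsPrimitiveRoot (e (1 / N)) N := isPrimitiveRoot_e_one_div hN.pos.ne'
  have hnorm := norm_quadGaussSum hN hζ
  obtain ⟨m, rfl⟩ := hN
  set P : ℝ := ∏ k ∈ range m, 2 * Real.sin (2 * Real.pi * ((2 * k + 1 : ℕ) / (2 * m + 1 : ℕ)))
  have hsum : quadGaussSum (e (1 / (2 * m + 1 : ℕ))) (2 * m + 1) = I ^ m * P := by
    have hfactor : ∀ k, e (1 / (2 * m + 1 : ℕ)) ^ (2 * k + 1) -
        (e (1 / (2 * m + 1 : ℕ)))⁻¹ ^ (2 * k + 1) =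
        I * (2 * Real.sin (2 * Real.pi * ((2 * k + 1 : ℕ) / (2 * m + 1 : ℕ))) : ℝ) := fun k ↦ by
      rw [inv_pow, ← e_nat_mul, e_sub_inv, mul_one_div]
    simp only [quadGaussSum_eq_prod hζ, hfactor, prod_mul_distrib, prod_const, card_range,
      ← ofReal_prod, P]
  have hpos : 0 < (-1) ^ (m / 2) * P := neg_one_pow_mul_prod_sin_pos m
  have hP : (-1) ^ (m / 2) * P = √(2 * m + 1 : ℕ) := by
    rw [← hnorm, hsum, ← abs_of_pos hpos]
    simp only [abs_mul, abs_pow, abs_neg, abs_one, norm_mul, norm_pow, norm_I, norm_real,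
      Real.norm_eq_abs, one_pow]
  have hunit : I ^ m * (-1) ^ (m / 2) = if (2 * m + 1) % 4 = 1 then 1 else I := by
    rcases Nat.even_or_odd' m with ⟨j, rfl | rfl⟩
    · rw [if_pos (by omega), pow_mul, I_sq, Nat.mul_div_cancel_left j two_pos, ← mul_pow]
      simp
    · rw [if_neg (by omega), show (2 * j + 1) / 2 = j by omega, pow_succ, pow_mul, I_sq,
        mul_right_comm, ← mul_pow]
      simp
  rw [hsum, ← hunit, ← hP]
  push_cast
  rw [mul_comm (_ * _ : ℂ), mul_assoc, ← mul_assoc ((-1) ^ _), ← mul_pow]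
  simp

lemma quadGaussSum_e_div_prime {p : ℕ} [Fact p.Prime] (hp : Odd p) {c : ℤ}
    (hc : (c : ZMod p) ≠ 0) :
    quadGaussSum (e (c / p)) p = √p * legendreSym p c * if p % 4 = 1 then 1 else I := by
  have hζ : IsPrimitiveRoot (e (1 / p)) p := isPrimitiveRoot_e_one_div hp.pos.ne'
  rw [← mul_one_div, e_int_mul, quadGaussSum_zpow hp hζ hc, quadGaussSum_e_one_div hp]
  ring

lemma quadGaussSum_e_div_sq_mul {c : ℤ} {d N : ℕ} (hd : Odd d) (hN : N ≠ 0)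
    (hc : IsCoprime c (d ^ 2 * N : ℕ)) :
    quadGaussSum (e (c / (d ^ 2 * N : ℕ))) (d ^ 2 * N) = d * quadGaussSum (e (c / N)) N := by
  have hd0 : (d : ℝ) ≠ 0 := Nat.cast_ne_zero.mpr hd.pos.ne'
  have hpow : e (c / (d ^ 2 * N : ℕ)) ^ d ^ 2 = e (c / N) := by
    rw [← e_nat_mul]
    congr 1
    push_cast
    field_simp
  rw [quadGaussSum_sq_mul hd hN (isPrimitiveRoot_e_div (by have := hd.pos; positivity) hc), hpow]

theorem stmt0 (p : ℕ) [Fact p.Prime] (hodd : Odd p) (t : ℕ) (ht : 1 ≤ t)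
    (c : ℤ) (hc : IsCoprime (p : ℤ) c) :
    ∑ r ∈ Finset.range (p ^ t), e ((c * (r : ℤ) ^ 2 : ℤ) / (p ^ t : ℝ)) =
      if Even t then (((p : ℝ) ^ ((t : ℝ) / 2) : ℝ) : ℂ)
      else (((p : ℝ) ^ ((t : ℝ) / 2) : ℝ) : ℂ) * (legendreSym p c : ℂ) *
        (if p % 4 = 1 then 1 else Complex.I) := by
  have hcoprime : IsCoprime c (p ^ t : ℕ) := by
    rw [Nat.cast_pow]
    exact hc.symm.pow_right
  have hsqrt : (p : ℝ) ^ ((t : ℝ) / 2) = √(p ^ t : ℕ) := by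
    rw [Real.sqrt_eq_rpow, Nat.cast_pow, ← Real.rpow_natCast, ← Real.rpow_mul p.cast_nonneg,
      mul_one_div]
  rw [← Nat.cast_pow, ← quadGaussSum_e_div, hsqrt]
  rcases Nat.even_or_odd' t with ⟨k, rfl | rfl⟩
  · have hpt : p ^ (2 * k) = (p ^ k) ^ 2 * 1 := by ring
    rw [if_pos (even_two_mul k)]
    rw [hpt] at hcoprime ⊢
    rw [quadGaussSum_e_div_sq_mul hodd.pow one_ne_zero hcoprime]
    simp [quadGaussSum]
  · have hpt : p ^ (2 * k + 1) = (p ^ k) ^ 2 * p := by ring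
    have hc0 : (c : ZMod p) ≠ 0 := ((ZMod.coe_int_isUnit_iff_isCoprime c p).mpr hc).ne_zero
    rw [if_neg (Nat.not_even_two_mul_add_one k)]
    rw [hpt] at hcoprime ⊢
    rw [quadGaussSum_e_div_sq_mul hodd.pow (NeZero.ne p) hcoprime,
      quadGaussSum_e_div_prime hodd hc0]
    simp [mul_assoc]
end

section
/- Let F be a quadratic polynomial in ℓ variables with first discriminant Δ_F ≠ 0 and first Q-root R_F. Let p be a prime with gcd(p, 2Δ_F R_F) = 1. Then the exponential sum S_F(p^t) = p^{-t} ∑_{a ∈ (ℤ/p^tℤ)^*} ∑_{h ∈ (ℤ/p^tℤ)^ℓ} e(aF(h)/p^t) satisfies: S_F(p) = p^{(ℓ-1)/2} (((-1)^{(ℓ+1)/2} R_F)/p) if ℓ is odd, S_F(p) = −p^{(ℓ-2)/2} (((-1)^{ℓ/2} Δ_F)/p) if ℓ is even, and S_F(p^t) = 0 for all t ≥ 2. -/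
open Complex Finset Matrix

/-- The normalized exponential sum `S_F(q)` for the quadratic polynomial
`F(x) = xᵀQx + bᵀx + c`. -/
noncomputable def SF (ℓ : ℕ) (Q : Matrix (Fin ℓ) (Fin ℓ) ℤ) (b : Fin ℓ → ℤ) (c : ℤ)
    (q : ℕ) [NeZero q] : ℂ :=
  (q : ℂ)⁻¹ * ∑ a : (ZMod q)ˣ, ∑ h : Fin ℓ → ZMod q,
    e ((((a : ZMod q).val : ℤ) *
        ((fun i => ((h i).val : ℤ)) ⬝ᵥ Q.mulVec (fun i => ((h i).val : ℤ)) +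
          b ⬝ᵥ (fun i => ((h i).val : ℤ)) + c) : ℤ) / (q : ℝ))

/-!
Over a finite field `K` of odd characteristic, completing the square at the critical point `x₀` of
`F` turns the inner sum into `χ(2^ℓ Δ_F a^ℓ) G^ℓ ψ(a F(x₀))`, where `χ` is the quadratic character
and `G` its Gauss sum. As `R_F = 2 Δ_F F(x₀)`, the remaining sum over `a` is the Gauss sum of `χ^ℓ`
at a multiple of `R_F`, and `G² = χ(-1) |K|` gives the value.

Over a finite local ring which is not a field, choose `n ≠ 0` annihilating the maximal ideal.
Averaging over the translations `x ↦ x + n • y` discards every `x` with `n ∇F(x) ≠ 0`. At the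
remaining `x`, Cramer's rule shows that `n F(x) = 0` would imply `n R_F = 0`; hence `F(x)` is a
unit, and the sum of `ψ(a F(x))` over the units `a` vanishes.
-/

/-- A polynomial `F(x) = xᵀQx + bᵀx + c` of degree at most two in the variables indexed by `ι`.
The matrix `Q` need not be symmetric, so it is part of the data rather than determined by `F`. -/
structure QuadraticPolynomial (R ι : Type*) where
  /-- The matrix `Q` of the quadratic part. -/
  quad : Matrix ι ι R
  /-- The coefficients `b` of the linear part. -/
  lin : ι → R
  /-- The constant term `c`. -/
  const : R

namespace QuadraticPolynomial

section CommRing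

variable {R R' ι : Type*} [CommRing R] [CommRing R'] [Fintype ι]

/-- The value `F(x) = xᵀQx + bᵀx + c`. -/
def eval (F : QuadraticPolynomial R ι) (x : ι → R) : R :=
  x ⬝ᵥ F.quad *ᵥ x + F.lin ⬝ᵥ x + F.const

/-- The Hessian matrix `Qᵀ + Q` of `F`. -/
def hessian {R ι : Type*} [CommRing R] (F : QuadraticPolynomial R ι) : Matrix ι ι R :=
  F.quadᵀ + F.quad

/-- The gradient `(Qᵀ + Q)x + b` of `F` at `x`. -/
def gradient (F : QuadraticPolynomial R ι) (x : ι → R) : ι → R :=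
  F.hessian *ᵥ x + F.lin

/-- The first discriminant `Δ_F = det (Qᵀ + Q)`. -/
def discr [DecidableEq ι] (F : QuadraticPolynomial R ι) : R :=
  F.hessian.det

/-- The first `Q`-root `R_F = 2cΔ_F - bᵀ adj(Qᵀ + Q) b`. -/
def root [DecidableEq ι] (F : QuadraticPolynomial R ι) : R :=
  2 * F.const * F.discr - F.lin ⬝ᵥ F.hessian.adjugate *ᵥ F.lin

/-- The quadratic polynomial obtained by applying a ring homomorphism to the coefficients. -/
def map (F : QuadraticPolynomial R ι) (f : R →+* R') : QuadraticPolynomial R' ι where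
  quad := F.quad.map f
  lin := f ∘ F.lin
  const := f F.const

/-- The unnormalized exponential sum `∑_{a ∈ Rˣ} ∑_{h ∈ R^ι} ψ(aF(h))`. -/
def expSum {S : Type*} [CommRing S] [Fintype R] [DecidableEq R] [DecidableEq ι]
    (ψ : AddChar R S) (F : QuadraticPolynomial R ι) : S :=
  ∑ a : Rˣ, ∑ h : ι → R, ψ (a * F.eval h)

lemma eval_map (F : QuadraticPolynomial R ι) (f : R →+* R') (x : ι → R) :
    (F.map f).eval (f ∘ x) = f (F.eval x) := by
  have mulVec_map : F.quad.map f *ᵥ (f ∘ x) = f ∘ (F.quad *ᵥ x) :=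
    funext fun i ↦ (f.map_mulVec F.quad x i).symm
  simp [eval, map, mulVec_map, RingHom.map_dotProduct]

omit [Fintype ι] in
lemma hessian_map (F : QuadraticPolynomial R ι) (f : R →+* R') :
    (F.map f).hessian = F.hessian.map f := by
  ext i j
  simp [hessian, map]

lemma discr_map [DecidableEq ι] (F : QuadraticPolynomial R ι) (f : R →+* R') :
    (F.map f).discr = f F.discr := by
  rw [discr, hessian_map, discr, RingHom.map_det, RingHom.mapMatrix_apply]

lemma root_map [DecidableEq ι] (F : QuadraticPolynomial R ι) (f : R →+* R') :
    (F.map f).root = f F.root := by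
  have adjugate_map : (F.hessian.map f).adjugate = F.hessian.adjugate.map f :=
    (f.map_adjugate F.hessian).symm
  have mulVec_map : F.hessian.adjugate.map f *ᵥ (f ∘ F.lin) = f ∘ (F.hessian.adjugate *ᵥ F.lin) :=
    funext fun i ↦ (f.map_mulVec F.hessian.adjugate F.lin i).symm
  rw [root, discr_map, hessian_map, adjugate_map]
  simp [root, map, mulVec_map, RingHom.map_dotProduct, map_ofNat f 2]

lemma two_mul_dotProduct_quad_mulVec (F : QuadraticPolynomial R ι) (x : ι → R) :
    2 * (x ⬝ᵥ F.quad *ᵥ x) = x ⬝ᵥ F.hessian *ᵥ x := by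
  rw [hessian, add_mulVec, dotProduct_add, dotProduct_transpose_mulVec]
  ring

lemma eval_add (F : QuadraticPolynomial R ι) (x y : ι → R) :
    F.eval (x + y) = F.eval x + F.gradient x ⬝ᵥ y + y ⬝ᵥ F.quad *ᵥ y := by
  have transpose_swap : F.quadᵀ *ᵥ x ⬝ᵥ y = x ⬝ᵥ F.quad *ᵥ y := by
    rw [dotProduct_comm, dotProduct_transpose_mulVec]
  simp only [eval, gradient, hessian, mulVec_add, add_mulVec, add_dotProduct, dotProduct_add,
    transpose_swap, dotProduct_comm (F.quad *ᵥ x) y]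
  ring

lemma two_mul_discr_mul_eval [DecidableEq ι] (F : QuadraticPolynomial R ι) (x : ι → R) :
    2 * F.discr * F.eval x =
      F.discr * (x ⬝ᵥ F.gradient x) + F.lin ⬝ᵥ F.hessian.adjugate *ᵥ F.gradient x + F.root := by
  have cramer : F.hessian.adjugate *ᵥ F.hessian *ᵥ x = F.discr • x := by
    rw [mulVec_mulVec, adjugate_mul, smul_mulVec, one_mulVec, discr]
  simp only [gradient, mulVec_add, cramer, eval, root, dotProduct_add, dotProduct_smul, smul_eq_mul,
    ← two_mul_dotProduct_quad_mulVec, dotProduct_comm x F.lin]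
  ring

lemma mul_root_eq_zero [DecidableEq ι] (F : QuadraticPolynomial R ι) {n : R} {x : ι → R}
    (heval : n * F.eval x = 0) (hgrad : n • F.gradient x = 0) : n * F.root = 0 := by
  have pairing_gradient : n * (x ⬝ᵥ F.gradient x) = 0 := by
    rw [← smul_eq_mul, ← dotProduct_smul, hgrad, dotProduct_zero]
  have pairing_adjugate_gradient : n * (F.lin ⬝ᵥ F.hessian.adjugate *ᵥ F.gradient x) = 0 := by
    rw [← smul_eq_mul, ← dotProduct_smul, ← mulVec_smul, hgrad, mulVec_zero, dotProduct_zero]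
  linear_combination
    2 * F.discr * heval - F.discr * pairing_gradient - pairing_adjugate_gradient -
      n * F.two_mul_discr_mul_eval x

end CommRing

section Field

variable {K ι : Type*} [Field K] [Fintype ι] [DecidableEq ι]

/-- The critical point `-(Qᵀ + Q)⁻¹b` of `F`. It is meaningful only when `Δ_F ≠ 0`. -/
noncomputable def criticalPoint (F : QuadraticPolynomial K ι) : ι → K :=
  -(F.hessian⁻¹ *ᵥ F.lin)

lemma gradient_criticalPoint {F : QuadraticPolynomial K ι} (hΔ : F.discr ≠ 0) :
    F.gradient F.criticalPoint = 0 := by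
  rw [gradient, criticalPoint, mulVec_neg, mulVec_mulVec,
    mul_nonsing_inv _ (isUnit_iff_ne_zero.2 hΔ), one_mulVec, neg_add_cancel]

lemma root_eq_two_mul_discr_mul_eval {F : QuadraticPolynomial K ι} (hΔ : F.discr ≠ 0) :
    F.root = 2 * F.discr * F.eval F.criticalPoint := by
  rw [two_mul_discr_mul_eval, gradient_criticalPoint hΔ]
  simp

end Field

end QuadraticPolynomial

section CharacterSums

variable {R S ι : Type*} [CommRing R] [CommRing S]

lemma isPrimitive_mulShift_of_isUnit {ψ : AddChar R S} (hψ : ψ.IsPrimitive) {u : R}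
    (hu : IsUnit u) : (ψ.mulShift u).IsPrimitive := fun a ha ↦ by
  rw [AddChar.mulShift_mulShift]
  exact hψ ((hu.mul_right_eq_zero).not.2 ha)

lemma sum_addChar_sum_eq_prod_sum [Fintype ι] [DecidableEq ι] [Fintype R] (ψ : AddChar R S)
    (f : ι → R → R) :
    ∑ x : ι → R, ψ (∑ i, f i (x i)) = ∏ i, ∑ t, ψ (f i t) := by
  have map_sum (x : ι → R) : ψ (∑ i, f i (x i)) = ∏ i, ψ (f i (x i)) :=
    map_prod ψ.toMonoidHom (fun i ↦ Multiplicative.ofAdd (f i (x i))) univ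
  simp only [map_sum, prod_univ_sum, Fintype.piFinset_univ]

lemma sum_addChar_dotProduct [IsDomain S] [Fintype ι] [DecidableEq ι] [Fintype R] [DecidableEq R]
    {ψ : AddChar R S} (hψ : ψ.IsPrimitive) (v : ι → R) :
    ∑ x : ι → R, ψ (v ⬝ᵥ x) = if v = 0 then (Fintype.card R : S) ^ Fintype.card ι else 0 := by
  have factor (i : ι) : ∑ t, ψ (v i * t) = if v i = 0 then (Fintype.card R : S) else 0 := by
    simpa only [mul_comm, Nat.cast_ite, Nat.cast_zero] using AddChar.sum_mulShift (v i) hψ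
  simp only [dotProduct, sum_addChar_sum_eq_prod_sum ψ fun i t ↦ v i * t, factor]
  split_ifs with hv
  · simp [hv]
  · obtain ⟨i, hi⟩ := Function.ne_iff.1 hv
    exact prod_eq_zero (mem_univ i) (if_neg hi)

lemma gaussSum_eq_sum_units [Fintype R] [DecidableEq R] (χ : MulChar R S) (ψ : AddChar R S) :
    gaussSum χ ψ = ∑ a : Rˣ, χ a * ψ a := by
  refine (sum_of_injOn Units.val Units.val_injective.injOn (by simp) ?_ (by simp)).symm
  intro x _ hx
  rw [χ.map_nonunit fun ⟨a, ha⟩ ↦ hx ⟨a, by simp, ha⟩, zero_mul]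

lemma gaussSum_mulShift_of_ne_one {K : Type*} [Field K] [Fintype K] [IsDomain S] {χ : MulChar K S}
    (hχ : χ ≠ 1) (ψ : AddChar K S) (a : K) :
    gaussSum χ (ψ.mulShift a) = χ⁻¹ a * gaussSum χ ψ := by
  obtain rfl | ha := eq_or_ne a 0
  · rw [AddChar.mulShift_zero, gaussSum_one_right hχ, MulChar.map_zero, zero_mul]
  · exact gaussSum_mulShift_eq χ ψ (Units.mk0 a ha)

end CharacterSums

section LocalRing

variable {R S : Type*} [CommRing R] [IsLocalRing R] [CommRing S]

lemma exists_mul_eq_zero_iff_not_isUnit [IsArtinianRing R] :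
    ∃ n : R, ∀ x, n * x = 0 ↔ ¬IsUnit x := by
  obtain ⟨P, hP⟩ := associatedPrimes.nonempty R R
  have : P.IsPrime := hP.isPrime
  obtain ⟨n, hn⟩ := (isAssociatedPrime_iff.1 hP).2
  refine ⟨n, fun x ↦ ?_⟩
  rw [← mem_nonunits_iff, ← IsLocalRing.mem_maximalIdeal,
    ← IsLocalRing.eq_maximalIdeal (IsArtinianRing.isMaximal_of_isPrime P), hn]
  simp [mul_comm]

variable [Fintype R] [IsDomain S]

lemma gaussSum_one_left_eq_zero (hR : ¬IsField R) {ψ : AddChar R S} (hψ : ψ.IsPrimitive) :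
    gaussSum (1 : MulChar R S) ψ = 0 := by
  obtain ⟨n, hn, hn₀⟩ := Submodule.exists_mem_ne_zero_of_ne_bot
    (mt IsLocalRing.isField_iff_maximalIdeal_eq.2 hR)
  obtain ⟨y, hy⟩ := AddChar.ne_one_iff.1 (hψ hn₀)
  have hz : n * y ∈ IsLocalRing.maximalIdeal R := Ideal.mul_mem_right y _ hn
  have isUnit_add (x : R) : IsUnit (x + n * y) ↔ IsUnit x := by
    simp only [← IsLocalRing.residue_ne_zero_iff_isUnit, map_add,
      (IsLocalRing.residue_eq_zero_iff _).2 hz, add_zero]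
  have one_add (x : R) : (1 : MulChar R S) (x + n * y) = (1 : MulChar R S) x := by
    by_cases hx : IsUnit x
    · rw [MulChar.one_apply hx, MulChar.one_apply ((isUnit_add x).2 hx)]
    · rw [MulChar.map_nonunit _ hx, MulChar.map_nonunit _ (mt (isUnit_add x).1 hx)]
  have invariant : gaussSum (1 : MulChar R S) ψ = ψ (n * y) * gaussSum (1 : MulChar R S) ψ := calc
    _ = ∑ x, (1 : MulChar R S) (x + n * y) * ψ (x + n * y) :=
      (Equiv.sum_comp (Equiv.addRight (n * y)) fun x ↦ (1 : MulChar R S) x * ψ x).symm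
    _ = ψ (n * y) * gaussSum 1 ψ := by
      simp only [gaussSum, mul_sum, one_add, AddChar.map_add_eq_mul]
      exact sum_congr rfl fun x _ ↦ by ring
  exact (mul_left_eq_self₀.1 invariant.symm).resolve_left hy

end LocalRing

namespace QuadraticPolynomial

section Vanishing

variable {R S ι : Type*} [CommRing R] [Fintype R] [DecidableEq R] [CommRing S] [IsDomain S]
  [CharZero S] [Fintype ι] [DecidableEq ι]

/-- Averaging over the translations `x ↦ x + n • y`, under which `F` varies linearly in `y`
because `n * n = 0`. -/
lemma sum_addChar_eval_eq_sum_ite {ψ : AddChar R S} (hψ : ψ.IsPrimitive)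
    (F : QuadraticPolynomial R ι) {n : R} (hn : n * n = 0) :
    ∑ x, ψ (F.eval x) = ∑ x, if n • F.gradient x = 0 then ψ (F.eval x) else 0 := by
  have eval_shift (x y : ι → R) :
      ψ (F.eval (x + n • y)) = ψ (F.eval x) * ψ ((n • F.gradient x) ⬝ᵥ y) := by
    rw [← AddChar.map_add_eq_mul, eval_add]
    simp only [mulVec_smul, smul_dotProduct, dotProduct_smul, smul_smul, hn, zero_smul, add_zero]
  have card_ne_zero : (Fintype.card R : S) ^ Fintype.card ι ≠ 0 :=
    pow_ne_zero _ (Nat.cast_ne_zero.2 Fintype.card_ne_zero)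
  apply mul_left_cancel₀ card_ne_zero
  calc (Fintype.card R : S) ^ Fintype.card ι * ∑ x, ψ (F.eval x)
    _ = ∑ _y : ι → R, ∑ x, ψ (F.eval x) := by simp
    _ = ∑ y : ι → R, ∑ x, ψ (F.eval (x + n • y)) :=
      sum_congr rfl fun y _ ↦ (Equiv.sum_comp (Equiv.addRight (n • y)) fun x ↦ ψ (F.eval x)).symm
    _ = ∑ x, ψ (F.eval x) * ∑ y, ψ ((n • F.gradient x) ⬝ᵥ y) := by
      rw [sum_comm]
      simp only [eval_shift, mul_sum]
    _ = (Fintype.card R : S) ^ Fintype.card ι *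
          ∑ x, if n • F.gradient x = 0 then ψ (F.eval x) else 0 := by
      simp only [sum_addChar_dotProduct hψ, mul_sum, mul_ite, mul_zero,
        mul_comm (ψ _), ite_mul, zero_mul]

theorem expSum_eq_zero [IsLocalRing R] (hR : ¬IsField R) {ψ : AddChar R S} (hψ : ψ.IsPrimitive)
    (F : QuadraticPolynomial R ι) (hF : IsUnit F.root) : F.expSum ψ = 0 := by
  obtain ⟨n, hn⟩ := exists_mul_eq_zero_iff_not_isUnit (R := R)
  have n_ne_zero : n ≠ 0 := by
    rintro rfl
    exact (hn 1).1 (zero_mul 1) isUnit_one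
  have n_mul_self : n * n = 0 := by
    by_contra h
    have n_unit : IsUnit n := not_not.1 (mt (hn n).2 h)
    refine hR (IsLocalRing.isField_iff_maximalIdeal_eq.2 (eq_bot_iff.2 fun x hx ↦ ?_))
    exact n_unit.mul_right_eq_zero.1 ((hn x).2 hx)
  have isUnit_eval {x : ι → R} (hx : n • F.gradient x = 0) : IsUnit (F.eval x) := by
    by_contra h
    exact n_ne_zero (hF.mul_left_eq_zero.1 (F.mul_root_eq_zero ((hn _).2 h) hx))
  calc F.expSum ψ
    _ = ∑ a : Rˣ, ∑ x, if n • F.gradient x = 0 then ψ (a * F.eval x) else 0 :=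
      sum_congr rfl fun a _ ↦ F.sum_addChar_eval_eq_sum_ite
        (isPrimitive_mulShift_of_isUnit hψ a.isUnit) n_mul_self
    _ = ∑ x, if n • F.gradient x = 0 then gaussSum 1 (ψ.mulShift (F.eval x)) else 0 := by
      rw [sum_comm]
      refine sum_congr rfl fun x _ ↦ ?_
      split_ifs
      · simp [gaussSum_eq_sum_units, mul_comm]
      · exact sum_const_zero
    _ = 0 := sum_eq_zero fun x _ ↦ ite_eq_right_iff.2 fun hx ↦
      gaussSum_one_left_eq_zero hR (isPrimitive_mulShift_of_isUnit hψ (isUnit_eval hx))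

end Vanishing

end QuadraticPolynomial

section Diagonalization

variable {K ι : Type*} [Field K] [Fintype ι] [DecidableEq ι]

lemma exists_transpose_mul_mul_eq_diagonal_of_isSymm (h2 : (2 : K) ≠ 0) {A : Matrix ι ι K}
    (hA : A.IsSymm) :
    ∃ (P : Matrix ι ι K) (d : ι → K), IsUnit P ∧ Pᵀ * A * P = diagonal d := by
  have : Invertible (2 : K) := invertibleOfNonzero h2
  have symm : LinearMap.IsSymm (Matrix.toBilin' A) := ⟨fun x y ↦ by
    simp only [Matrix.toBilin'_apply', RingHom.id_apply]
    rw [← dotProduct_transpose_mulVec, hA.eq]⟩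
  obtain ⟨v, hv⟩ := LinearMap.BilinForm.exists_orthogonal_basis symm
  let w : Module.Basis ι K (ι → K) := v.reindex (Fintype.equivOfCardEq (by simp))
  have orthogonal {i j : ι} (hij : i ≠ j) : Matrix.toBilin' A (w i) (w j) = 0 := by
    simpa only [w, Module.Basis.reindex_apply] using hv ((Equiv.injective _).ne hij)
  have gram :=
    LinearMap.BilinForm.toMatrix_mul_basis_toMatrix (Pi.basisFun K ι) w (Matrix.toBilin' A)
  rw [LinearMap.BilinForm.toMatrix_basisFun, LinearMap.BilinForm.toMatrix'_toBilin'] at gram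
  refine ⟨(Pi.basisFun K ι).toMatrix w, fun i ↦ Matrix.toBilin' A (w i) (w i),
    .of_mul_eq_one _ (Module.Basis.toMatrix_mul_toMatrix_flip _ w), ?_⟩
  rw [gram]
  ext i j
  rw [LinearMap.BilinForm.toMatrix_apply, diagonal_apply]
  split_ifs with hij
  · rw [hij]
  · exact orthogonal hij

end Diagonalization

section FiniteField

variable {K : Type*} [Field K] [Fintype K] [DecidableEq K] {S : Type*} [CommRing S]

/-- The quadratic character of a finite field with values in an arbitrary commutative ring. -/
noncomputable def quadraticCharIn (K : Type*) [Field K] [Fintype K] [DecidableEq K]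
    (S : Type*) [CommRing S] : MulChar K S :=
  (quadraticChar K).ringHomComp (Int.castRingHom S)

lemma quadraticCharIn_apply (x : K) : quadraticCharIn K S x = (quadraticChar K x : S) := rfl

lemma isQuadratic_quadraticCharIn : (quadraticCharIn K S).IsQuadratic :=
  (quadraticChar_isQuadratic K).comp _

lemma quadraticCharIn_ne_one [CharZero S] (hK : ringChar K ≠ 2) : quadraticCharIn K S ≠ 1 :=
  (MulChar.ringHomComp_ne_one_iff Int.cast_injective).2 (quadraticChar_ne_one hK)

lemma quadraticCharIn_mul_sq (x : K) {y : K} (hy : y ≠ 0) :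
    quadraticCharIn K S (x * y ^ 2) = quadraticCharIn K S x := by
  rw [map_mul, quadraticCharIn_apply (y ^ 2), quadraticChar_sq_one' hy, Int.cast_one, mul_one]

variable [IsDomain S]

lemma sum_addChar_sq (hK : ringChar K ≠ 2) {ψ : AddChar K S} (hψ : ψ ≠ 1) :
    ∑ x, ψ (x ^ 2) = gaussSum (quadraticCharIn K S) ψ := by
  have card_sqrts (y : K) : (#{x | x ^ 2 = y} : S) = quadraticCharIn K S y + 1 := by
    have card_sqrts_int := quadraticChar_card_sqrts hK y
    rw [Set.toFinset_ofPred] at card_sqrts_int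
    rw [quadraticCharIn_apply]
    exact_mod_cast congrArg (Int.cast : ℤ → S) card_sqrts_int
  calc ∑ x, ψ (x ^ 2)
    _ = ∑ y, ∑ x with x ^ 2 = y, ψ (x ^ 2) := (sum_fiberwise _ _ _).symm
    _ = ∑ y, (quadraticCharIn K S y + 1) * ψ y := by
      refine sum_congr rfl fun y _ ↦ ?_
      rw [sum_congr rfl fun x hx ↦ congrArg ψ (mem_filter.1 hx).2, sum_const, nsmul_eq_mul,
        card_sqrts]
    _ = gaussSum (quadraticCharIn K S) ψ := by
      simp only [add_mul, one_mul, sum_add_distrib, AddChar.sum_eq_zero_of_ne_one hψ, add_zero,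
        gaussSum]

variable [CharZero S]

lemma gaussSum_quadraticCharIn_mulShift (hK : ringChar K ≠ 2) (ψ : AddChar K S) (a : K) :
    gaussSum (quadraticCharIn K S) (ψ.mulShift a) =
      quadraticCharIn K S a * gaussSum (quadraticCharIn K S) ψ := by
  rw [gaussSum_mulShift_of_ne_one (quadraticCharIn_ne_one hK), isQuadratic_quadraticCharIn.inv]

lemma gaussSum_quadraticCharIn_pow_two_mul (hK : ringChar K ≠ 2) {ψ : AddChar K S}
    (hψ : ψ.IsPrimitive) (m : ℕ) :
    gaussSum (quadraticCharIn K S) ψ ^ (2 * m) =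
      quadraticCharIn K S ((-1) ^ m) * (Fintype.card K : S) ^ m := by
  rw [pow_mul, gaussSum_sq (quadraticCharIn_ne_one hK) isQuadratic_quadraticCharIn hψ, mul_pow,
    map_pow]

variable {ι : Type*} [Fintype ι] [DecidableEq ι]

lemma sum_addChar_weightedSumSquares (hK : ringChar K ≠ 2) {ψ : AddChar K S} (hψ : ψ.IsPrimitive)
    {d : ι → K} (hd : ∀ i, d i ≠ 0) :
    ∑ x : ι → K, ψ (∑ i, d i * x i ^ 2) =
      quadraticCharIn K S (∏ i, d i) * gaussSum (quadraticCharIn K S) ψ ^ Fintype.card ι := by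
  rw [sum_addChar_sum_eq_prod_sum ψ fun i t ↦ d i * t ^ 2]
  calc ∏ i, ∑ t, ψ (d i * t ^ 2)
    _ = ∏ i, quadraticCharIn K S (d i) * gaussSum (quadraticCharIn K S) ψ :=
      prod_congr rfl fun i _ ↦ by
        rw [← gaussSum_quadraticCharIn_mulShift hK, ← sum_addChar_sq hK (hψ (hd i))]
        rfl
    _ = _ := by rw [prod_mul_distrib, prod_const, card_univ, map_prod]

lemma sum_addChar_dotProduct_mulVec (hK : ringChar K ≠ 2) {ψ : AddChar K S} (hψ : ψ.IsPrimitive)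
    {A : Matrix ι ι K} (hA : A.IsSymm) (hdet : A.det ≠ 0) :
    ∑ x, ψ (x ⬝ᵥ A *ᵥ x) =
      quadraticCharIn K S A.det * gaussSum (quadraticCharIn K S) ψ ^ Fintype.card ι := by
  obtain ⟨P, d, hP, hd⟩ := exists_transpose_mul_mul_eq_diagonal_of_isSymm
    (Ring.two_ne_zero hK) hA
  have hPdet : P.det ≠ 0 := ((isUnit_iff_isUnit_det P).1 hP).ne_zero
  have prod_d : ∏ i, d i = A.det * P.det ^ 2 := by
    rw [← det_diagonal, ← hd, det_mul, det_mul, det_transpose]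
    ring
  have d_ne_zero (i : ι) : d i ≠ 0 :=
    prod_ne_zero_iff.1 (prod_d ▸ mul_ne_zero hdet (pow_ne_zero 2 hPdet)) i (mem_univ i)
  have diagonalized (x : ι → K) : P *ᵥ x ⬝ᵥ A *ᵥ P *ᵥ x = ∑ i, d i * x i ^ 2 := by
    rw [dotProduct_comm, ← dotProduct_transpose_mulVec, mulVec_mulVec, mulVec_mulVec, hd]
    exact sum_congr rfl fun i _ ↦ by rw [mulVec_diagonal]; ring
  have bijective : Function.Bijective P.mulVec :=
    ⟨mulVec_injective_iff_isUnit.2 hP, mulVec_surjective_iff_isUnit.2 hP⟩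
  rw [← bijective.sum_comp]
  simp only [diagonalized]
  rw [sum_addChar_weightedSumSquares hK hψ d_ne_zero, prod_d, quadraticCharIn_mul_sq _ hPdet]

namespace QuadraticPolynomial

lemma sum_addChar_dotProduct_quad_mulVec (hK : ringChar K ≠ 2) {ψ : AddChar K S}
    (hψ : ψ.IsPrimitive) {F : QuadraticPolynomial K ι} (hΔ : F.discr ≠ 0) :
    ∑ x, ψ (x ⬝ᵥ F.quad *ᵥ x) =
      quadraticCharIn K S (2 ^ Fintype.card ι * F.discr) *
        gaussSum (quadraticCharIn K S) ψ ^ Fintype.card ι := by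
  have h2 : (2 : K) ≠ 0 := Ring.two_ne_zero hK
  have symmetrized (x : ι → K) : x ⬝ᵥ F.quad *ᵥ x = x ⬝ᵥ ((2 : K)⁻¹ • F.hessian) *ᵥ x := by
    rw [smul_mulVec, dotProduct_smul, ← two_mul_dotProduct_quad_mulVec, smul_eq_mul,
      inv_mul_cancel_left₀ h2]
  have isSymm : ((2 : K)⁻¹ • F.hessian).IsSymm :=
    (isSymm_transpose_add_self F.quad).smul _
  have det_eq : ((2 : K)⁻¹ • F.hessian).det =
      2 ^ Fintype.card ι * F.discr * ((2 : K)⁻¹ ^ Fintype.card ι) ^ 2 := by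
    rw [det_smul, discr, inv_pow]
    field_simp
  have inv_two_pow_ne_zero : (2 : K)⁻¹ ^ Fintype.card ι ≠ 0 := pow_ne_zero _ (inv_ne_zero h2)
  have det_ne_zero : ((2 : K)⁻¹ • F.hessian).det ≠ 0 := by
    rw [det_smul]
    exact mul_ne_zero inv_two_pow_ne_zero hΔ
  simp only [symmetrized]
  rw [sum_addChar_dotProduct_mulVec hK hψ isSymm det_ne_zero, det_eq,
    quadraticCharIn_mul_sq _ inv_two_pow_ne_zero]

lemma sum_addChar_eval (hK : ringChar K ≠ 2) {ψ : AddChar K S} (hψ : ψ.IsPrimitive)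
    {F : QuadraticPolynomial K ι} (hΔ : F.discr ≠ 0) :
    ∑ x, ψ (F.eval x) =
      quadraticCharIn K S (2 ^ Fintype.card ι * F.discr) *
        gaussSum (quadraticCharIn K S) ψ ^ Fintype.card ι * ψ (F.eval F.criticalPoint) := by
  rw [← sum_addChar_dotProduct_quad_mulVec hK hψ hΔ, sum_mul,
    ← Equiv.sum_comp (Equiv.addLeft F.criticalPoint)]
  refine sum_congr rfl fun x _ ↦ ?_
  rw [Equiv.coe_addLeft, eval_add, gradient_criticalPoint hΔ, zero_dotProduct, add_zero,
    AddChar.map_add_eq_mul, mul_comm]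

lemma expSum_eq_mul_gaussSum (hK : ringChar K ≠ 2) {ψ : AddChar K S} (hψ : ψ.IsPrimitive)
    {F : QuadraticPolynomial K ι} (hΔ : F.discr ≠ 0) :
    F.expSum ψ =
      quadraticCharIn K S (2 ^ Fintype.card ι * F.discr) *
        gaussSum (quadraticCharIn K S) ψ ^ Fintype.card ι *
        gaussSum (quadraticCharIn K S ^ Fintype.card ι) (ψ.mulShift (F.eval F.criticalPoint)) := by
  rw [expSum, gaussSum_eq_sum_units (quadraticCharIn K S ^ Fintype.card ι), mul_sum]
  refine sum_congr rfl fun a _ ↦ ?_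
  have inner_sum := sum_addChar_eval hK (isPrimitive_mulShift_of_isUnit hψ a.isUnit) hΔ
  simp only [gaussSum_quadraticCharIn_mulShift hK, AddChar.mulShift_apply] at inner_sum
  rw [inner_sum, MulChar.pow_apply_coe, AddChar.mulShift_apply, mul_comm (F.eval _)]
  ring

theorem expSum_of_odd_card (hK : ringChar K ≠ 2) {ψ : AddChar K S} (hψ : ψ.IsPrimitive)
    {F : QuadraticPolynomial K ι} (hΔ : F.discr ≠ 0) (hι : Odd (Fintype.card ι)) :
    F.expSum ψ = (Fintype.card K : S) ^ ((Fintype.card ι + 1) / 2) *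
      quadraticCharIn K S ((-1) ^ ((Fintype.card ι + 1) / 2) * F.root) := by
  rw [expSum_eq_mul_gaussSum hK hψ hΔ, isQuadratic_quadraticCharIn.pow_odd hι,
    gaussSum_quadraticCharIn_mulShift hK]
  obtain ⟨m, hm⟩ := hι
  have half : (2 * m + 1 + 1) / 2 = m + 1 := by omega
  have root_eq : 2 ^ (2 * m + 1) * F.discr * F.eval F.criticalPoint = F.root * (2 ^ m) ^ 2 := by
    rw [root_eq_two_mul_discr_mul_eval hΔ]
    ring
  have χ_root : quadraticCharIn K S F.root =
      quadraticCharIn K S (2 ^ (2 * m + 1) * F.discr) *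
        quadraticCharIn K S (F.eval F.criticalPoint) := by
    rw [← map_mul, root_eq, quadraticCharIn_mul_sq _ (pow_ne_zero m (Ring.two_ne_zero hK))]
  have gauss_pow := gaussSum_quadraticCharIn_pow_two_mul hK hψ (m + 1)
  rw [hm, half, map_mul (quadraticCharIn K S) ((-1) ^ (m + 1)), χ_root]
  linear_combination quadraticCharIn K S (2 ^ (2 * m + 1) * F.discr) *
    quadraticCharIn K S (F.eval F.criticalPoint) * gauss_pow

theorem expSum_of_even_card (hK : ringChar K ≠ 2) {ψ : AddChar K S} (hψ : ψ.IsPrimitive)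
    {F : QuadraticPolynomial K ι} (hΔ : F.discr ≠ 0) (hR : F.root ≠ 0)
    (hι : Even (Fintype.card ι)) :
    F.expSum ψ = -((Fintype.card K : S) ^ (Fintype.card ι / 2) *
      quadraticCharIn K S ((-1) ^ (Fintype.card ι / 2) * F.discr)) := by
  have eval_ne_zero : F.eval F.criticalPoint ≠ 0 :=
    right_ne_zero_of_mul (root_eq_two_mul_discr_mul_eval hΔ ▸ hR)
  obtain ⟨m, hm⟩ := hι
  rw [expSum_eq_mul_gaussSum hK hψ hΔ, isQuadratic_quadraticCharIn.pow_even ⟨m, hm⟩,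
    gaussSum_one_left (hψ eval_ne_zero)]
  have half : 2 * m / 2 = m := by omega
  rw [hm, ← two_mul, half, gaussSum_quadraticCharIn_pow_two_mul hK hψ, map_mul, map_mul,
    mul_comm 2 m, pow_mul, ← one_mul ((2 ^ m) ^ 2),
    quadraticCharIn_mul_sq _ (pow_ne_zero m (Ring.two_ne_zero hK)), map_one]
  ring

end QuadraticPolynomial

end FiniteField

lemma legendreSym_eq_quadraticCharIn (S : Type*) [CommRing S] (p : ℕ) [Fact p.Prime] (x : ℤ) :
    (legendreSym p x : S) = quadraticCharIn (ZMod p) S x := rfl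

section PrimePower

lemma isLocalRing_zmod_prime_pow (p : ℕ) [Fact p.Prime] {t : ℕ} (ht : t ≠ 0) :
    IsLocalRing (ZMod (p ^ t)) := by
  have : Fact (1 < p ^ t) := ⟨Nat.one_lt_pow ht (Fact.out : p.Prime).one_lt⟩
  exact .of_surjective' (PadicInt.toZModPow t) (ZMod.ringHom_surjective _)

lemma not_isField_zmod_prime_pow (p : ℕ) [Fact p.Prime] {t : ℕ} (ht : 2 ≤ t) :
    ¬IsField (ZMod (p ^ t)) := by
  intro h
  have := h.isDomain
  have p_eq_zero : (p : ZMod (p ^ t)) = 0 := by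
    apply eq_zero_of_pow_eq_zero (n := t)
    rw [← Nat.cast_pow, ZMod.natCast_self]
  have p_pow_dvd : p ^ t ∣ p ^ 1 := by
    rw [pow_one, ← ZMod.natCast_eq_zero_iff, p_eq_zero]
  have := (Nat.pow_dvd_pow_iff_le_right (Fact.out : p.Prime).one_lt).1 p_pow_dvd
  omega

end PrimePower

namespace QuadraticPolynomial

variable {ι : Type*} [Fintype ι] [DecidableEq ι] (F : QuadraticPolynomial ℤ ι) {q : ℕ}

lemma isUnit_discr_map (hΔ : IsCoprime (q : ℤ) F.discr) :
    IsUnit (F.map (Int.castRingHom (ZMod q))).discr := by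
  rw [F.discr_map]
  exact (ZMod.coe_int_isUnit_iff_isCoprime _ _).2 hΔ

lemma isUnit_root_map (hR : IsCoprime (q : ℤ) F.root) :
    IsUnit (F.map (Int.castRingHom (ZMod q))).root := by
  rw [F.root_map]
  exact (ZMod.coe_int_isUnit_iff_isCoprime _ _).2 hR

end QuadraticPolynomial

section ZModPrime

lemma SF_eq_inv_mul_expSum {ℓ : ℕ} (F : QuadraticPolynomial ℤ (Fin ℓ)) (q : ℕ) [NeZero q] :
    SF ℓ F.quad F.lin F.const q =
      (q : ℂ)⁻¹ * (F.map (Int.castRingHom (ZMod q))).expSum ZMod.stdAddChar := by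
  have eval_lift (h : Fin ℓ → ZMod q) :
      (F.map (Int.castRingHom (ZMod q))).eval h = (F.eval fun i ↦ ((h i).val : ℤ) : ℤ) := by
    rw [← eq_intCast (Int.castRingHom (ZMod q)), ← F.eval_map]
    congr
    ext i
    simp
  unfold SF QuadraticPolynomial.expSum
  congr 1
  refine sum_congr (by congr!) fun a _ ↦ sum_congr rfl fun h _ ↦ ?_
  have mul_lift (x : ℤ) : (a : ZMod q) * x = (((a : ZMod q).val * x : ℤ) : ZMod q) := by simp
  rw [eval_lift, mul_lift, ZMod.stdAddChar_coe, e]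
  congr 1
  push_cast [QuadraticPolynomial.eval]
  ring

variable {ℓ p : ℕ} [Fact p.Prime] {F : QuadraticPolynomial ℤ (Fin ℓ)}

theorem SF_prime_of_odd (hp : p ≠ 2) (hΔ : IsCoprime (p : ℤ) F.discr) (hℓ : Odd ℓ) :
    SF ℓ F.quad F.lin F.const p =
      (p : ℂ) ^ ((ℓ - 1) / 2) * (legendreSym p ((-1) ^ ((ℓ + 1) / 2) * F.root) : ℂ) := by
  have hK : ringChar (ZMod p) ≠ 2 := by rwa [ZMod.ringChar_zmod_n]
  have p_ne_zero : (p : ℂ) ≠ 0 := NeZero.ne _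
  have exponent : (ℓ + 1) / 2 = (ℓ - 1) / 2 + 1 := by have := hℓ.pos; omega
  rw [SF_eq_inv_mul_expSum, QuadraticPolynomial.expSum_of_odd_card hK
    (ZMod.isPrimitive_stdAddChar p) (F.isUnit_discr_map hΔ).ne_zero (by rwa [Fintype.card_fin]),
    F.root_map, eq_intCast, ZMod.card, Fintype.card_fin, legendreSym_eq_quadraticCharIn,
    exponent, pow_succ']
  push_cast
  field_simp

theorem SF_prime_of_even (hp : p ≠ 2) (hΔ : IsCoprime (p : ℤ) F.discr)
    (hR : IsCoprime (p : ℤ) F.root) (hℓ : Even ℓ) (hℓ₀ : ℓ ≠ 0) :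
    SF ℓ F.quad F.lin F.const p =
      -((p : ℂ) ^ ((ℓ - 2) / 2) * (legendreSym p ((-1) ^ (ℓ / 2) * F.discr) : ℂ)) := by
  have hK : ringChar (ZMod p) ≠ 2 := by rwa [ZMod.ringChar_zmod_n]
  have p_ne_zero : (p : ℂ) ≠ 0 := NeZero.ne _
  have exponent : ℓ / 2 = (ℓ - 2) / 2 + 1 := by have := hℓ.two_dvd; omega
  rw [SF_eq_inv_mul_expSum, QuadraticPolynomial.expSum_of_even_card hK
    (ZMod.isPrimitive_stdAddChar p) (F.isUnit_discr_map hΔ).ne_zero (F.isUnit_root_map hR).ne_zero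
    (by rwa [Fintype.card_fin]),
    F.discr_map, eq_intCast, ZMod.card, Fintype.card_fin, legendreSym_eq_quadraticCharIn,
    exponent, pow_succ']
  push_cast
  field_simp

theorem SF_prime_pow_eq_zero (hR : IsCoprime (p : ℤ) F.root) {t : ℕ} (ht : 2 ≤ t) :
    SF ℓ F.quad F.lin F.const (p ^ t) = 0 := by
  have : IsLocalRing (ZMod (p ^ t)) := isLocalRing_zmod_prime_pow p (by omega)
  have root_coprime : IsCoprime ((p ^ t : ℕ) : ℤ) F.root := by
    rw [Nat.cast_pow]
    exact hR.pow_left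
  rw [SF_eq_inv_mul_expSum, QuadraticPolynomial.expSum_eq_zero (not_isField_zmod_prime_pow p ht)
    (ZMod.isPrimitive_stdAddChar _) _ (F.isUnit_root_map root_coprime), mul_zero]

end ZModPrime

theorem stmt7 (ℓ : ℕ) (hℓ : 1 ≤ ℓ) (Q : Matrix (Fin ℓ) (Fin ℓ) ℤ) (b : Fin ℓ → ℤ) (c : ℤ)
    (hΔ : (Qᵀ + Q).det ≠ 0)
    (p : ℕ) [Fact p.Prime]
    (hp : IsCoprime (p : ℤ)
      (2 * (Qᵀ + Q).det * (2 * c * (Qᵀ + Q).det - b ⬝ᵥ (Qᵀ + Q).adjugate.mulVec b))) :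
    (Odd ℓ → SF ℓ Q b c p =
        (p : ℂ) ^ ((ℓ - 1) / 2) *
          (legendreSym p ((-1) ^ ((ℓ + 1) / 2) *
            (2 * c * (Qᵀ + Q).det - b ⬝ᵥ (Qᵀ + Q).adjugate.mulVec b)) : ℂ)) ∧
    (Even ℓ → SF ℓ Q b c p =
        -((p : ℂ) ^ ((ℓ - 2) / 2) *
          (legendreSym p ((-1) ^ (ℓ / 2) * (Qᵀ + Q).det) : ℂ))) ∧
    (∀ t : ℕ, 2 ≤ t → SF ℓ Q b c (p ^ t) = 0) := by
  let F : QuadraticPolynomial ℤ (Fin ℓ) := ⟨Q, b, c⟩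
  change IsCoprime (p : ℤ) (2 * F.discr * F.root) at hp
  have hR : IsCoprime (p : ℤ) F.root := hp.of_mul_right_right
  have hΔ' : IsCoprime (p : ℤ) F.discr := hp.of_mul_right_left.of_mul_right_right
  have p_ne_two : p ≠ 2 := by
    rintro rfl
    exact Int.prime_two.not_isUnit (isCoprime_self.1 hp.of_mul_right_left.of_mul_right_left)
  exact ⟨SF_prime_of_odd (F := F) p_ne_two hΔ',
    fun hℓ_even ↦ SF_prime_of_even (F := F) p_ne_two hΔ' hR hℓ_even (by omega),
    fun _ ↦ SF_prime_pow_eq_zero (F := F) hR⟩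
end
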